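/- Let N ≥ 4, m = ⌊N/2⌋, r > 0, and let f : (0,4r²] → ℝ be 2m-times differentiable with (−1)^k f^{(k)}(t) ≥ 0 for all t ∈ (0,4r²] and all integers 0 ≤ k ≤ 2m. Then any N equally spaced points on the circle C_r = {x ∈ ℝ² : ‖x‖ = r} (i.e., x_k = r(cos(θ + 2kπ/N), sin(θ + 2kπ/N)), k = 0,…,N−1, for some θ) minimize the energy Σ_{i≠j} f(‖x_i−x_j‖²) among all N-tuples of pairwise distinct points on C_r. If moreover (−1)^k f^{(k)}(t) > 0 for all t ∈ (0,4r²) and all 0 ≤ k ≤ 2m, then the N-tuples of equally spaced points are the only minimizers. -/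

import Mathlib

open Real

/-- The energy `Σ_{i≠j} f(‖x_i − x_j‖²)` of a tuple of points in `ℝ²`. -/
noncomputable def pairEnergy (N : ℕ) (f : ℝ → ℝ)
    (X : Fin N → EuclideanSpace ℝ (Fin 2)) : ℝ :=
  ∑ i : Fin N, ∑ j : Fin N, if i ≠ j then f (‖X i - X j‖ ^ 2) else 0

/-- The point `r(cos θ, sin θ)` on the circle of radius `r` in `ℝ²`. -/
noncomputable def circlePt (r θ : ℝ) : EuclideanSpace ℝ (Fin 2) :=
  (WithLp.equiv 2 (Fin 2 → ℝ)).symm ![r * cos θ, r * sin θ]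

/-! The energy of points on `C_r` is a sum of `g (cos (x_i - x_j))` over pairs of angles, where
`g t = f (2r²(1 - t))` has nonnegative derivatives of orders `1, …, 2m`. Let `H` be the Hermite
interpolant of `g` to second order at the `m` inner products of distinct vertices of the regular
`N`-gon. Its error is a divided difference of `g` of order `2m` times a square, so `H ≤ g`.

In the Newton form of `H` the nonconstant coefficients are divided differences of `g`, hence
nonnegative, and by the `q`-binomial theorem the Newton products are combinations of `cos (d θ)`,
`d < N`, with nonnegative coefficients. For each such cosine the double sum over `i, j` is a squared
modulus `|∑ exp (i d x_k)|²`, which vanishes at the regular `N`-gon when `0 < d < N`; so the `N`-gon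
minimizes the `H`-energy, and with it the `g`-energy. For equality every inner product must be a
node, which puts all the points on one regular `N`-gon. -/

open Set Filter MeasureTheory
open scoped Interval NNReal Topology

section SegmentMoment

/-- The `j`-th moment `∫₀¹ sʲ ψ(a + s(t - a)) ds` of `ψ` along the segment from `a` to `t`.
For `ψ = φ⁽ʲ⁺¹⁾` it is the `j`-th derivative in `t` of the difference quotient
`(φ t - φ a) / (t - a)`, with no singularity at `t = a`. -/
noncomputable def segmentMoment (ψ : ℝ → ℝ) (a : ℝ) (j : ℕ) (t : ℝ) : ℝ :=
  ∫ s in (0 : ℝ)..1, s ^ j * ψ (a + s * (t - a))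

variable {A B a t : ℝ} {ψ ψ' : ℝ → ℝ}

theorem segment_mem_Icc {s : ℝ} (ha : a ∈ Icc A B) (ht : t ∈ Icc A B) (hs : s ∈ Icc (0 : ℝ) 1) :
    a + s * (t - a) ∈ Icc A B :=
  (convex_Icc A B).add_smul_sub_mem ha ht hs

theorem segment_mem_Ioo {s : ℝ} (ha : a ∈ Icc A B) (ht : t ∈ Ioo A B) (hs : s ∈ Ioc (0 : ℝ) 1) :
    a + s * (t - a) ∈ Ioo A B := by
  rw [← interior_Icc] at ht ⊢
  exact (convex_Icc A B).add_smul_sub_mem_interior ha ht hs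

theorem segment_mem_Ioo_of_ne {s : ℝ} (ha : a ∈ Icc A B) (ht : t ∈ Icc A B) (hta : t ≠ a)
    (hs : s ∈ Ioo (0 : ℝ) 1) : a + s * (t - a) ∈ Ioo A B := by
  rw [← interior_Icc]
  exact (strictConvex_Icc A B).add_smul_sub_mem ha ht hta.symm hs.1 hs.2

theorem continuousOn_comp_segment (hψ : ContinuousOn ψ (Icc A B)) (ha : a ∈ Icc A B)
    (ht : t ∈ Icc A B) : ContinuousOn (fun s ↦ ψ (a + s * (t - a))) (Icc 0 1) :=
  hψ.comp (by fun_prop) fun _ hs ↦ segment_mem_Icc ha ht hs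

theorem intervalIntegrable_segmentMoment (hψ : ContinuousOn ψ (Icc A B)) (ha : a ∈ Icc A B)
    (ht : t ∈ Icc A B) (j : ℕ) :
    IntervalIntegrable (fun s ↦ s ^ j * ψ (a + s * (t - a))) volume 0 1 :=
  ((by fun_prop : ContinuousOn (fun s : ℝ ↦ s ^ j) _).mul
    (continuousOn_comp_segment hψ ha ht)).intervalIntegrable_of_Icc zero_le_one

theorem exists_bound_segmentMoment (hψ : ContinuousOn ψ (Icc A B)) (ha : a ∈ Icc A B) (j : ℕ) :
    ∃ C, ∀ s ∈ Ι (0 : ℝ) 1, ∀ t ∈ Icc A B, ‖s ^ j * ψ (a + s * (t - a))‖ ≤ C := by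
  obtain ⟨C, hC⟩ := isCompact_Icc.exists_bound_of_continuousOn hψ
  refine ⟨C, fun s hs t ht ↦ ?_⟩
  rw [uIoc_of_le zero_le_one] at hs
  have hpow : ‖s ^ j‖ ≤ 1 := by
    rw [norm_pow, norm_of_nonneg hs.1.le]
    exact pow_le_one₀ hs.1.le hs.2
  rw [norm_mul]
  exact (mul_le_of_le_one_left (norm_nonneg _) hpow).trans
    (hC _ (segment_mem_Icc ha ht (Ioc_subset_Icc_self hs)))

theorem continuousOn_segmentMoment (hψ : ContinuousOn ψ (Icc A B)) (ha : a ∈ Icc A B) (j : ℕ) :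
    ContinuousOn (segmentMoment ψ a j) (Icc A B) := by
  obtain ⟨C, hC⟩ := exists_bound_segmentMoment hψ ha j
  intro x hx
  refine intervalIntegral.continuousWithinAt_of_dominated_interval (bound := fun _ ↦ C) ?_ ?_
    intervalIntegrable_const ?_
  · filter_upwards [self_mem_nhdsWithin] with t ht
    exact (intervalIntegrable_segmentMoment hψ ha ht j).aestronglyMeasurable_restrict_uIoc
  · filter_upwards [self_mem_nhdsWithin] with t ht
    exact .of_forall fun s hs ↦ hC s hs t ht
  · refine .of_forall fun s hs ↦ ?_
    rw [uIoc_of_le zero_le_one] at hs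
    have hmaps : MapsTo (fun t ↦ a + s * (t - a)) (Icc A B) (Icc A B) :=
      fun t ht ↦ segment_mem_Icc ha ht (Ioc_subset_Icc_self hs)
    exact continuousWithinAt_const.mul
      (hψ.comp (f := fun t ↦ a + s * (t - a)) (by fun_prop) hmaps x hx)

theorem hasDerivAt_segmentMoment (hψ : ContinuousOn ψ (Icc A B)) (hψ' : ContinuousOn ψ' (Icc A B))
    (hderiv : ∀ x ∈ Ioo A B, HasDerivAt ψ (ψ' x) x) (ha : a ∈ Icc A B) (j : ℕ)
    (ht : t ∈ Ioo A B) : HasDerivAt (segmentMoment ψ a j) (segmentMoment ψ' a (j + 1) t) t := by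
  obtain ⟨C, hC⟩ := exists_bound_segmentMoment hψ' ha (j + 1)
  have hnhds : Ioo A B ∈ 𝓝 t := Ioo_mem_nhds ht.1 ht.2
  have htIcc : t ∈ Icc A B := Ioo_subset_Icc_self ht
  refine (intervalIntegral.hasDerivAt_integral_of_dominated_loc_of_deriv_le
    (F := fun t s ↦ s ^ j * ψ (a + s * (t - a)))
    (F' := fun t s ↦ s ^ (j + 1) * ψ' (a + s * (t - a)))
    (bound := fun _ ↦ C) hnhds ?_ (intervalIntegrable_segmentMoment hψ ha htIcc j)
    (intervalIntegrable_segmentMoment hψ' ha htIcc (j + 1)).aestronglyMeasurable_restrict_uIoc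
    (.of_forall fun s hs x hx ↦ hC s hs x (Ioo_subset_Icc_self hx))
    intervalIntegrable_const (.of_forall fun s hs x hx ↦ ?_)).2
  · filter_upwards [hnhds] with x hx
    exact (intervalIntegrable_segmentMoment hψ ha
      (Ioo_subset_Icc_self hx) j).aestronglyMeasurable_restrict_uIoc
  · rw [uIoc_of_le zero_le_one] at hs
    have hinner : HasDerivAt (fun x ↦ a + s * (x - a)) (s * 1) x :=
      (((hasDerivAt_id x).sub_const a).const_mul s).const_add a
    exact (((hderiv _ (segment_mem_Ioo ha hx hs)).comp x hinner).const_mul (s ^ j)).congr_deriv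
      (by ring)

theorem segmentMoment_nonneg (hψ : ∀ x ∈ Icc A B, 0 ≤ ψ x) (ha : a ∈ Icc A B) (j : ℕ)
    (ht : t ∈ Icc A B) : 0 ≤ segmentMoment ψ a j t :=
  intervalIntegral.integral_nonneg zero_le_one fun _ hs ↦
    mul_nonneg (pow_nonneg hs.1 _) (hψ _ (segment_mem_Icc ha ht hs))

theorem segmentMoment_pos (hψ : ContinuousOn ψ (Icc A B)) (hpos : ∀ x ∈ Ioo A B, 0 < ψ x)
    (ha : a ∈ Icc A B) (j : ℕ) (ht : t ∈ Icc A B) (hta : t ≠ a) : 0 < segmentMoment ψ a j t :=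
  intervalIntegral.intervalIntegral_pos_of_pos_on (intervalIntegrable_segmentMoment hψ ha ht j)
    (fun _ hs ↦ mul_pos (pow_pos hs.1 _) (hpos _ (segment_mem_Ioo_of_ne ha ht hta hs))) zero_lt_one

theorem segmentMoment_pos_of_mem_Ioo (hψ : ContinuousOn ψ (Icc A B))
    (hpos : ∀ x ∈ Ioo A B, 0 < ψ x) (ha : a ∈ Icc A B) (j : ℕ) (ht : t ∈ Ioo A B) :
    0 < segmentMoment ψ a j t :=
  intervalIntegral.intervalIntegral_pos_of_pos_on
    (intervalIntegrable_segmentMoment hψ ha (Ioo_subset_Icc_self ht) j)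
    (fun _ hs ↦ mul_pos (pow_pos hs.1 _)
      (hpos _ (segment_mem_Ioo ha ht (Ioo_subset_Ioc_self hs)))) zero_lt_one

theorem sub_eq_mul_segmentMoment_zero (hψ : ContinuousOn ψ (Icc A B))
    (hψ' : ContinuousOn ψ' (Icc A B)) (hderiv : ∀ x ∈ Ioo A B, HasDerivAt ψ (ψ' x) x)
    (ha : a ∈ Icc A B) (ht : t ∈ Icc A B) :
    ψ t - ψ a = (t - a) * segmentMoment ψ' a 0 t := by
  rcases eq_or_ne t a with rfl | hta
  · simp only [sub_self, zero_mul]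
  have hftc : ∫ s in (0 : ℝ)..1, ψ' (a + s * (t - a)) * (t - a) =
      ψ (a + 1 * (t - a)) - ψ (a + 0 * (t - a)) := by
    refine intervalIntegral.integral_eq_sub_of_hasDerivAt_of_le zero_le_one
      (f := fun s ↦ ψ (a + s * (t - a))) (continuousOn_comp_segment hψ ha ht) (fun s hs ↦ ?_)
      (((continuousOn_comp_segment hψ' ha ht).mul_const _).intervalIntegrable_of_Icc zero_le_one)
    have hinner : HasDerivAt (fun s ↦ a + s * (t - a)) (1 * (t - a)) s :=
      ((hasDerivAt_id s).mul_const _).const_add a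
    rw [one_mul] at hinner
    exact (hderiv _ (segment_mem_Ioo_of_ne ha ht hta hs)).comp s hinner
  rw [intervalIntegral.integral_mul_const] at hftc
  simp only [segmentMoment, pow_zero, one_mul, zero_mul, add_zero, add_sub_cancel] at hftc ⊢
  rw [mul_comm, hftc]

end SegmentMoment

section DividedDifferences

/-- A function `φ 0` on `[A, B]` together with its successive derivatives `φ 1, …, φ n`, all of them
nonnegative: `φ 0` is absolutely monotone of order `n` up to an additive constant. The derivatives
are carried as data, with one-sided information at the endpoints expressed by continuity. -/
structure MonotoneTower (A B : ℝ) (n : ℕ) (φ : ℕ → ℝ → ℝ) : Prop where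
  continuousOn : ∀ j ≤ n, ContinuousOn (φ j) (Icc A B)
  nonneg : ∀ j, 1 ≤ j → j ≤ n → ∀ x ∈ Icc A B, 0 ≤ φ j x
  hasDerivAt : ∀ j < n, ∀ x ∈ Ioo A B, HasDerivAt (φ j) (φ (j + 1) x) x

/-- `dividedDiff a φ k j` is the `j`-th derivative of the divided difference
`t ↦ φ[a 0, …, a (k - 1), t]` of `φ 0`, where `φ j` stands for the `j`-th derivative of `φ 0`.
The integral formula makes sense for repeated nodes. -/
noncomputable def dividedDiff (a : ℕ → ℝ) (φ : ℕ → ℝ → ℝ) : ℕ → ℕ → ℝ → ℝ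
  | 0 => φ
  | k + 1 => fun j ↦ segmentMoment (dividedDiff a φ k (j + 1)) (a k) j

variable {A B t : ℝ} {k l m n : ℕ} {a b : ℕ → ℝ} {φ : ℕ → ℝ → ℝ}

theorem MonotoneTower.of_le (h : MonotoneTower A B n φ) (hk : k ≤ n) : MonotoneTower A B k φ where
  continuousOn j hj := h.continuousOn j (hj.trans hk)
  nonneg j hj hjk := h.nonneg j hj (hjk.trans hk)
  hasDerivAt j hj := h.hasDerivAt j (hj.trans_le hk)

theorem MonotoneTower.segmentMoment {c : ℝ} (h : MonotoneTower A B (n + 1) φ)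
    (hc : c ∈ Icc A B) : MonotoneTower A B n (fun j ↦ segmentMoment (φ (j + 1)) c j) where
  continuousOn j hj := continuousOn_segmentMoment (h.continuousOn _ (by lia)) hc j
  nonneg j _ hj _ hx := segmentMoment_nonneg (h.nonneg _ (by lia) (by lia)) hc j hx
  hasDerivAt j hj _ hx := hasDerivAt_segmentMoment (h.continuousOn _ (by lia))
    (h.continuousOn _ (by lia)) (h.hasDerivAt _ (by lia)) hc j hx

theorem MonotoneTower.dividedDiff (h : MonotoneTower A B (l + k) φ) (ha : ∀ i < k, a i ∈ Icc A B) :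
    MonotoneTower A B l (dividedDiff a φ k) := by
  induction k generalizing l with
  | zero => exact h
  | succ k ih =>
    rw [← add_assoc, add_right_comm] at h
    exact (ih h fun i hi ↦ ha i (by lia)).segmentMoment (ha k k.lt_succ_self)

theorem dividedDiff_nonneg (h : MonotoneTower A B (k + 1) φ) (ha : ∀ i ≤ k, a i ∈ Icc A B)
    (ht : t ∈ Icc A B) : 0 ≤ dividedDiff a φ (k + 1) 0 t := by
  rw [add_comm] at h
  exact segmentMoment_nonneg ((h.dividedDiff fun i hi ↦ ha i hi.le).nonneg 1 le_rfl le_rfl)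
    (ha k le_rfl) 0 ht

theorem dividedDiff_pos_of_mem_Ioo (h : MonotoneTower A B (l + k) φ)
    (ha : ∀ i < k, a i ∈ Icc A B) (hpos : ∀ x ∈ Ioo A B, 0 < φ (l + k) x) (ht : t ∈ Ioo A B) :
    0 < dividedDiff a φ k l t := by
  induction k generalizing l t with
  | zero => exact hpos t ht
  | succ k ih =>
    rw [← add_assoc, add_right_comm] at h hpos
    have ha' : ∀ i < k, a i ∈ Icc A B := fun i hi ↦ ha i (by lia)
    exact segmentMoment_pos_of_mem_Ioo ((h.dividedDiff ha').continuousOn _ le_rfl)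
      (fun x hx ↦ ih h ha' hpos hx) (ha k k.lt_succ_self) l ht

theorem dividedDiff_pos (h : MonotoneTower A B (k + 1) φ) (ha : ∀ i ≤ k, a i ∈ Icc A B)
    (hpos : ∀ x ∈ Ioo A B, 0 < φ (k + 1) x) (ht : t ∈ Icc A B) (hta : t ≠ a k) :
    0 < dividedDiff a φ (k + 1) 0 t := by
  rw [add_comm] at h hpos
  have ha' : ∀ i < k, a i ∈ Icc A B := fun i hi ↦ ha i hi.le
  exact segmentMoment_pos ((h.dividedDiff ha').continuousOn 1 le_rfl)
    (fun x hx ↦ dividedDiff_pos_of_mem_Ioo h ha' hpos hx) (ha k le_rfl) 0 ht hta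

theorem newton_expansion (h : MonotoneTower A B k φ) (ha : ∀ i < k, a i ∈ Icc A B)
    (ht : t ∈ Icc A B) :
    φ 0 t = ∑ l ∈ Finset.range k, dividedDiff a φ l 0 (a l) * ∏ i ∈ Finset.range l, (t - a i) +
      dividedDiff a φ k 0 t * ∏ i ∈ Finset.range k, (t - a i) := by
  induction k with
  | zero => simp [dividedDiff]
  | succ k ih =>
    rw [add_comm] at h
    have ha' : ∀ i < k, a i ∈ Icc A B := fun i hi ↦ ha i (by lia)
    have htower : MonotoneTower A B 1 (dividedDiff a φ k) := h.dividedDiff ha'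
    have hstep : dividedDiff a φ k 0 t - dividedDiff a φ k 0 (a k) =
        (t - a k) * dividedDiff a φ (k + 1) 0 t :=
      sub_eq_mul_segmentMoment_zero (htower.continuousOn 0 zero_le_one)
        (htower.continuousOn 1 le_rfl) (htower.hasDerivAt 0 one_pos) (ha k k.lt_succ_self) ht
    rw [ih (h.of_le (Nat.le_add_left k 1)) ha', Finset.sum_range_succ, Finset.prod_range_succ]
    linear_combination (∏ i ∈ Finset.range k, (t - a i)) * hstep

/-- The Newton form of the polynomial of degree `< 2 * m` that agrees with `φ 0` to second order at
each of the nodes `b 0, …, b (m - 1)`: node number `i` of the Newton form is `b (i / 2)`. -/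
noncomputable def hermiteInterpolant (b : ℕ → ℝ) (m : ℕ) (φ : ℕ → ℝ → ℝ) (t : ℝ) : ℝ :=
  ∑ l ∈ Finset.range (2 * m), dividedDiff (fun i ↦ b (i / 2)) φ l 0 (b (l / 2)) *
    ∏ i ∈ Finset.range l, (t - b (i / 2))

theorem prod_range_div_two {M : Type*} [CommMonoid M] (g : ℕ → M) (n : ℕ) :
    ∏ i ∈ Finset.range n, g (i / 2) =
      (∏ l ∈ Finset.range ((n + 1) / 2), g l) * ∏ l ∈ Finset.range (n / 2), g l := by
  induction n with
  | zero => simp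
  | succ n ih =>
    rw [Finset.prod_range_succ, ih, show (n + 1 + 1) / 2 = n / 2 + 1 by lia,
      Finset.prod_range_succ, mul_assoc, mul_comm]

theorem eq_hermiteInterpolant_add (h : MonotoneTower A B (2 * m) φ)
    (hb : ∀ l < m, b l ∈ Icc A B) (ht : t ∈ Icc A B) :
    φ 0 t = hermiteInterpolant b m φ t +
      dividedDiff (fun i ↦ b (i / 2)) φ (2 * m) 0 t * (∏ l ∈ Finset.range m, (t - b l)) ^ 2 := by
  have hprod := prod_range_div_two (fun l ↦ t - b l) (2 * m)
  rw [show (2 * m + 1) / 2 = m by lia, Nat.mul_div_cancel_left m two_pos, ← sq] at hprod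
  rw [← hprod]
  exact newton_expansion h (fun i hi ↦ hb _ (by lia)) ht

theorem hermiteInterpolant_le (hm : m ≠ 0) (h : MonotoneTower A B (2 * m) φ)
    (hb : ∀ l < m, b l ∈ Icc A B) (ht : t ∈ Icc A B) : hermiteInterpolant b m φ t ≤ φ 0 t := by
  rw [eq_hermiteInterpolant_add h hb ht]
  obtain ⟨n, rfl⟩ := Nat.exists_eq_succ_of_ne_zero hm
  have hrem := dividedDiff_nonneg (k := 2 * n + 1) (a := fun i ↦ b (i / 2)) h
    (fun i hi ↦ hb _ (by lia)) ht
  exact le_add_of_nonneg_right (mul_nonneg hrem (sq_nonneg _))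

theorem hermiteInterpolant_node (h : MonotoneTower A B (2 * m) φ)
    (hb : ∀ l < m, b l ∈ Icc A B) (hl : l < m) : hermiteInterpolant b m φ (b l) = φ 0 (b l) := by
  have hprod : ∏ i ∈ Finset.range m, (b l - b i) = 0 :=
    Finset.prod_eq_zero (Finset.mem_range.2 hl) (sub_self _)
  rw [eq_hermiteInterpolant_add h hb (hb l hl), hprod, zero_pow two_ne_zero, mul_zero, add_zero]

theorem exists_eq_node_of_hermiteInterpolant_eq (hm : m ≠ 0) (h : MonotoneTower A B (2 * m) φ)
    (hb : ∀ l < m, b l ∈ Icc A B) (hpos : ∀ x ∈ Ioo A B, 0 < φ (2 * m) x) (ht : t ∈ Icc A B)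
    (heq : hermiteInterpolant b m φ t = φ 0 t) : ∃ l < m, t = b l := by
  rw [eq_hermiteInterpolant_add h hb ht, left_eq_add, mul_eq_zero,
    pow_eq_zero_iff two_ne_zero, Finset.prod_eq_zero_iff] at heq
  obtain ⟨n, rfl⟩ := Nat.exists_eq_succ_of_ne_zero hm
  by_cases htn : t = b ((2 * n + 1) / 2)
  · exact ⟨_, by lia, htn⟩
  have hrem := dividedDiff_pos (k := 2 * n + 1) (a := fun i ↦ b (i / 2)) h
    (fun i hi ↦ hb _ (by lia)) hpos ht htn
  obtain ⟨l, hl, htl⟩ := heq.resolve_left hrem.ne'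
  exact ⟨l, Finset.mem_range.1 hl, sub_eq_zero.1 htl⟩

end DividedDifferences

section CosineCone

/-- The cone of cosine polynomials `∑ c_d cos (d θ)` of degree at most `n` with nonnegative
coefficients. Indexing the generators by integers makes the product rule uniform. -/
def cosineCone (n : ℕ) : Submodule ℝ≥0 (ℝ → ℝ) :=
  Submodule.span ℝ≥0 {g | ∃ d : ℤ, d.natAbs ≤ n ∧ g = fun θ ↦ cos (d * θ)}

variable {n k N : ℕ} {P Q : ℝ → ℝ}

theorem cos_int_mul_mem_cosineCone {d : ℤ} (hd : d.natAbs ≤ n) :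
    (fun θ : ℝ ↦ cos (d * θ)) ∈ cosineCone n :=
  Submodule.subset_span ⟨d, hd, rfl⟩

theorem cosineCone_mono (h : n ≤ k) : cosineCone n ≤ cosineCone k :=
  Submodule.span_mono fun _ ⟨d, hd, hg⟩ ↦ ⟨d, hd.trans h, hg⟩

theorem const_mul_mem_cosineCone {c : ℝ} (hc : 0 ≤ c) (hP : P ∈ cosineCone n) :
    (fun θ ↦ c * P θ) ∈ cosineCone n :=
  (cosineCone n).smul_mem ⟨c, hc⟩ hP

theorem const_mem_cosineCone {c : ℝ} (hc : 0 ≤ c) : (fun _ ↦ c) ∈ cosineCone n := by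
  simpa only [Int.cast_zero, zero_mul, cos_zero, mul_one] using
    const_mul_mem_cosineCone hc (cos_int_mul_mem_cosineCone (d := 0) n.zero_le)

theorem mul_mem_cosineCone (hP : P ∈ cosineCone n) (hQ : Q ∈ cosineCone k) :
    P * Q ∈ cosineCone (n + k) := by
  suffices hle : cosineCone n * cosineCone k ≤ cosineCone (n + k) from
    hle (Submodule.mul_mem_mul hP hQ)
  rw [cosineCone, cosineCone, Submodule.span_mul_span, Submodule.span_le]
  rintro _ ⟨_, ⟨d, hd, rfl⟩, _, ⟨e, he, rfl⟩, rfl⟩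
  rw [SetLike.mem_coe]
  convert const_mul_mem_cosineCone (c := 1 / 2) (by norm_num)
    (add_mem (cos_int_mul_mem_cosineCone (d := d - e) (n := n + k) (by lia))
      (cos_int_mul_mem_cosineCone (d := d + e) (by lia))) using 1
  ext θ
  have hprod := two_mul_cos_mul_cos (d * θ) (e * θ)
  simp only [Pi.mul_apply, Pi.add_apply, Int.cast_sub, Int.cast_add, sub_mul, add_mul]
  linarith

theorem sum_cos_sub_eq_norm_sq {ι : Type*} [Fintype ι] (x : ι → ℝ) :
    ∑ i, ∑ j, cos (x i - x j) = ‖∑ i, Complex.exp (x i * Complex.I)‖ ^ 2 := by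
  simp only [← Complex.normSq_eq_norm_sq, Complex.normSq_apply, Complex.re_sum, Complex.im_sum,
    Complex.exp_ofReal_mul_I_re, Complex.exp_ofReal_mul_I_im, cos_sub, Finset.sum_add_distrib,
    Finset.sum_mul_sum]

/-- The angles `2πi/N` of the regular `N`-gon. -/
noncomputable def equiAngle (N i : ℕ) : ℝ := 2 * i * π / N

theorem sum_exp_mul_equiAngle_eq_zero {d : ℤ} (hd : d ≠ 0) (hdN : d.natAbs < N) :
    ∑ i : Fin N, Complex.exp ((d * equiAngle N i : ℝ) * Complex.I) = 0 := by
  have hN : N ≠ 0 := by lia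
  have hζ := Complex.isPrimitiveRoot_exp N hN
  set ζ := Complex.exp (2 * π * Complex.I / N)
  have hone : ζ ^ d ≠ 1 := fun h ↦
    hd (Int.eq_zero_of_dvd_of_natAbs_lt_natAbs ((hζ.zpow_eq_one_iff_dvd d).1 h) hdN)
  have hpow : (ζ ^ d) ^ N = 1 := by
    rw [← zpow_natCast, zpow_comm, zpow_natCast, hζ.pow_eq_one, one_zpow]
  have hterm (i : Fin N) :
      Complex.exp ((d * equiAngle N i : ℝ) * Complex.I) = (ζ ^ d) ^ (i : ℕ) := by
    rw [← Complex.exp_int_mul, ← Complex.exp_nat_mul, equiAngle]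
    push_cast
    ring_nf
  simp only [hterm]
  rw [Fin.sum_univ_eq_sum_range (fun i ↦ (ζ ^ d) ^ i), geom_sum_eq hone, hpow, sub_self, zero_div]

theorem sum_equiAngle_le_of_mem_cosineCone (hP : P ∈ cosineCone n) (hn : n < N) (x : Fin N → ℝ) :
    ∑ i : Fin N, ∑ j : Fin N, P (equiAngle N i - equiAngle N j) ≤
      ∑ i, ∑ j, P (x i - x j) := by
  induction hP using Submodule.span_induction with
  | mem g hg =>
    obtain ⟨d, hd, rfl⟩ := hg
    rcases eq_or_ne d 0 with rfl | hd0
    · simp only [Int.cast_zero, zero_mul, le_refl]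
    simp only [mul_sub]
    rw [sum_cos_sub_eq_norm_sq (fun i : Fin N ↦ d * equiAngle N i),
      sum_cos_sub_eq_norm_sq (fun i ↦ d * x i),
      sum_exp_mul_equiAngle_eq_zero hd0 (hd.trans_lt hn), norm_zero, zero_pow two_ne_zero]
    exact sq_nonneg _
  | zero => exact le_rfl
  | add g h _ _ hg hh =>
    simpa only [Pi.add_apply, Finset.sum_add_distrib] using add_le_add hg hh
  | smul c g _ hg =>
    simpa only [Pi.smul_apply, NNReal.smul_def, smul_eq_mul, ← Finset.mul_sum] using
      mul_le_mul_of_nonneg_left hg c.coe_nonneg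

end CosineCone

section GaussianBinomial

/-- The symmetric Gaussian binomial coefficient at `q = exp (2iα)`, with the quantum integer `[k]`
replaced by `sin (k α)`: the common factor `1 / sin α` cancels in the ratios. -/
noncomputable def sinBinomial (α : ℝ) (n j : ℕ) : ℝ :=
  ∏ i ∈ Finset.range j, sin ((n - i) * α) / sin ((i + 1) * α)

/-- The product `∏ 2 cos ((θ + s α) / 2)` over `s = n - 1, n - 3, …, 1 - n`, the symmetric form of
the `q`-Pochhammer product `∏ (1 + qⁱ z)` at `q = exp (2iα)`, `z = exp (iθ)`. -/
noncomputable def halfAngleProd (α : ℝ) (n : ℕ) (θ : ℝ) : ℝ :=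
  ∏ i ∈ Finset.range n, 2 * cos ((θ + (n - 1 - 2 * i) * α) / 2)

variable {α : ℝ} {n : ℕ}

theorem sinBinomial_zero_right (α : ℝ) (n : ℕ) : sinBinomial α n 0 = 1 := rfl

theorem sinBinomial_succ_self (α : ℝ) (n : ℕ) : sinBinomial α n (n + 1) = 0 :=
  Finset.prod_eq_zero (Finset.self_mem_range_succ n) (by simp only [sub_self, zero_mul, sin_zero,
    zero_div])

theorem sinBinomial_nonneg (hα : ∀ i < n, 0 < sin ((i + 1) * α)) {j : ℕ} (hj : j ≤ n) :
    0 ≤ sinBinomial α n j := by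
  refine Finset.prod_nonneg fun i hi ↦ ?_
  have hij := Finset.mem_range.1 hi
  have hnum := hα (n - i - 1) (by lia)
  rw [← Nat.cast_add_one, show n - i - 1 + 1 = n - i by lia, Nat.cast_sub (by lia)] at hnum
  exact div_nonneg hnum.le (hα i (by lia)).le

theorem sinBinomial_succ_mul_sin (α : ℝ) (n j : ℕ) :
    sinBinomial α (n + 1) j * sin ((n + 1 - j) * α) = sinBinomial α n j * sin ((n + 1) * α) := by
  induction j with
  | zero => simp only [sinBinomial_zero_right, Nat.cast_zero, sub_zero]
  | succ j ih =>
    simp only [sinBinomial, Finset.prod_range_succ] at ih ⊢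
    push_cast at ih ⊢
    rw [add_sub_add_right_eq_sub]
    linear_combination sin ((n - j) * α) / sin ((j + 1) * α) * ih

theorem sinBinomial_succ_succ_mul_sin (n : ℕ) {j : ℕ} (hj : sin ((j + 1) * α) ≠ 0) :
    sinBinomial α (n + 1) (j + 1) * sin ((j + 1) * α) =
      sinBinomial α n j * sin ((n + 1) * α) := by
  rw [← sinBinomial_succ_mul_sin, sinBinomial, Finset.prod_range_succ, Nat.cast_add_one, mul_assoc,
    div_mul_cancel₀ _ hj, sinBinomial]
  push_cast
  rfl

theorem halfAngleProd_succ (α : ℝ) (n : ℕ) (θ : ℝ) :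
    halfAngleProd α (n + 1) θ = halfAngleProd α n (θ + α) * (2 * cos ((θ - n * α) / 2)) := by
  have hlast : (θ + ((n + 1 : ℕ) - 1 - 2 * n) * α) / 2 = (θ - n * α) / 2 := by push_cast; ring
  have hshift (i : ℕ) : (θ + ((n + 1 : ℕ) - 1 - 2 * i) * α) / 2 =
      (θ + α + (n - 1 - 2 * i) * α) / 2 := by push_cast; ring
  rw [halfAngleProd, Finset.prod_range_succ, hlast]
  simp only [hshift, halfAngleProd]

theorem halfAngleProd_add_two (α : ℝ) (n : ℕ) (θ : ℝ) :
    halfAngleProd α (n + 2) θ = halfAngleProd α n θ * (2 * (cos θ + cos ((n + 1) * α))) := by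
  have hfirst : (θ + ((n + 2 : ℕ) - 1 - 2 * (0 : ℕ)) * α) / 2 = (θ + (n + 1) * α) / 2 := by
    push_cast; ring
  have hlast : (θ + ((n + 2 : ℕ) - 1 - 2 * (n + 1 : ℕ)) * α) / 2 = (θ - (n + 1) * α) / 2 := by
    push_cast; ring
  have hshift (i : ℕ) : (θ + ((n + 2 : ℕ) - 1 - 2 * (i + 1 : ℕ)) * α) / 2 =
      (θ + (n - 1 - 2 * i) * α) / 2 := by push_cast; ring
  rw [halfAngleProd, Finset.prod_range_succ, Finset.prod_range_succ', cos_add_cos, hfirst, hlast]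
  simp only [hshift, halfAngleProd]
  ring

theorem halfAngleProd_add_two_mul (α : ℝ) (n k : ℕ) (θ : ℝ) :
    halfAngleProd α (n + 2 * k) θ =
      halfAngleProd α n θ *
        (2 ^ k * ∏ l ∈ Finset.range k, (cos θ + cos ((n + 2 * l + 1) * α))) := by
  induction k with
  | zero => simp
  | succ k ih =>
    rw [mul_add_one, ← add_assoc, halfAngleProd_add_two, ih, Finset.prod_range_succ]
    push_cast
    ring

theorem sin_add_mul_cos (x y z : ℝ) :
    sin (x + z) * cos y = sin x * cos (y - z) + sin z * cos (y + x) := by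
  rw [sin_add, cos_sub, cos_add]
  ring

theorem sin_mul_sum_sinBinomial_succ (hα : ∀ i ≤ n, sin ((i + 1) * α) ≠ 0) (y : ℕ → ℝ) :
    sin ((n + 1) * α) * ∑ j ∈ Finset.range (n + 2), sinBinomial α (n + 1) j * cos (y j) =
      sin ((n + 1) * α) * ∑ j ∈ Finset.range (n + 1), sinBinomial α n j *
        (cos (y j - j * α) + cos (y (j + 1) + (n - j) * α)) := by
  have hsplit (j : ℕ) : sin ((n + 1) * α) * (sinBinomial α (n + 1) j * cos (y j)) =
      sin ((n + 1) * α) * (sinBinomial α n j * cos (y j - j * α)) +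
        sinBinomial α (n + 1) j * sin (j * α) * cos (y j + (n + 1 - j) * α) := by
    have haddition := sin_add_mul_cos ((n + 1 - j) * α) (y j) (j * α)
    rw [← add_mul, sub_add_cancel] at haddition
    linear_combination sinBinomial α (n + 1) j * haddition +
      cos (y j - j * α) * sinBinomial_succ_mul_sin α n j
  have hfirst : ∑ j ∈ Finset.range (n + 2), sinBinomial α n j * cos (y j - j * α) =
      ∑ j ∈ Finset.range (n + 1), sinBinomial α n j * cos (y j - j * α) := by
    rw [Finset.sum_range_succ, sinBinomial_succ_self, zero_mul, add_zero]
  have hsecond : ∑ j ∈ Finset.range (n + 2),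
      sinBinomial α (n + 1) j * sin (j * α) * cos (y j + (n + 1 - j) * α) =
      ∑ j ∈ Finset.range (n + 1),
        sin ((n + 1) * α) * (sinBinomial α n j * cos (y (j + 1) + (n - j) * α)) := by
    rw [Finset.sum_range_succ', Nat.cast_zero, zero_mul, sin_zero, mul_zero, zero_mul, add_zero]
    refine Finset.sum_congr rfl fun j hj ↦ ?_
    rw [Nat.cast_add_one, sinBinomial_succ_succ_mul_sin n (hα j (by grind)),
      add_sub_add_right_eq_sub]
    ring
  rw [Finset.mul_sum]
  simp only [hsplit, mul_add, Finset.sum_add_distrib]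
  rw [← Finset.mul_sum, hfirst, hsecond, ← Finset.mul_sum]

/-- The `q`-binomial theorem in trigonometric form. The phase `ψ` makes the statement inductive:
a new factor `2 cos` splits the summand with phase `ψ` into two with shifted phases. -/
theorem halfAngleProd_mul_cos (hα : ∀ i < n, sin ((i + 1) * α) ≠ 0) (θ ψ : ℝ) :
    halfAngleProd α n θ * cos ψ =
      ∑ j ∈ Finset.range (n + 1), sinBinomial α n j * cos ((n - 2 * j) * θ / 2 + ψ) := by
  induction n generalizing θ ψ with
  | zero => simp [halfAngleProd, sinBinomial]
  | succ n ih =>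
    specialize ih fun i hi ↦ hα i (by lia)
    have hprod := two_mul_cos_mul_cos ψ ((θ - n * α) / 2)
    have hpascal := sin_mul_sum_sinBinomial_succ (n := n) (fun i hi ↦ hα i (by lia))
      fun j ↦ (n + 1 - 2 * j) * θ / 2 + ψ
    rw [Nat.cast_add_one, mul_left_cancel₀ (hα n n.lt_succ_self) hpascal]
    calc halfAngleProd α (n + 1) θ * cos ψ
        = halfAngleProd α n (θ + α) * cos (ψ + (θ - n * α) / 2) +
            halfAngleProd α n (θ + α) * cos (ψ - (θ - n * α) / 2) := by
          rw [halfAngleProd_succ]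
          linear_combination halfAngleProd α n (θ + α) * hprod
      _ = _ := by
          rw [ih, ih, ← Finset.sum_add_distrib]
          refine Finset.sum_congr rfl fun j _ ↦ ?_
          rw [← mul_add]
          push_cast
          congr 3 <;> ring

theorem halfAngleProd_mul_cos_mem_cosineCone (hα : ∀ i < n, 0 < sin ((i + 1) * α)) {e k : ℕ}
    (hne : n + e = 2 * k) :
    (fun θ ↦ halfAngleProd α n θ * cos (e * θ / 2)) ∈ cosineCone k := by
  have hexpand : (fun θ ↦ halfAngleProd α n θ * cos (e * θ / 2)) =
      ∑ j ∈ Finset.range (n + 1),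
        fun θ : ℝ ↦ sinBinomial α n j * cos ((k - j : ℤ) * θ) := by
    have hne' : (n + e : ℝ) = 2 * k := by exact_mod_cast hne
    ext θ
    rw [halfAngleProd_mul_cos (fun i hi ↦ (hα i hi).ne'), Finset.sum_apply]
    refine Finset.sum_congr rfl fun j _ ↦ ?_
    push_cast
    congr 2
    linear_combination θ / 2 * hne'
  rw [hexpand]
  refine sum_mem fun j hj ↦ const_mul_mem_cosineCone (sinBinomial_nonneg hα (by grind))
    (cos_int_mul_mem_cosineCone (by grind))

theorem prod_cos_add_cos_odd_mem_cosineCone {k : ℕ} (hα : ∀ i < 2 * k, 0 < sin ((i + 1) * α)) :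
    (fun θ ↦ ∏ l ∈ Finset.range k, (cos θ + cos ((2 * l + 1) * α))) ∈ cosineCone k := by
  convert const_mul_mem_cosineCone (c := (2 ^ k)⁻¹) (by positivity)
    (halfAngleProd_mul_cos_mem_cosineCone hα (add_zero (2 * k))) using 2 with θ
  have hprod := halfAngleProd_add_two_mul α 0 k θ
  simp only [zero_add, Nat.cast_zero, halfAngleProd, Finset.range_zero, Finset.prod_empty,
    one_mul] at hprod
  rw [halfAngleProd, hprod, Nat.cast_zero, zero_mul, zero_div, cos_zero, mul_one,
    inv_mul_cancel_left₀ (by positivity)]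

theorem prod_cos_add_cos_even_mem_cosineCone {k : ℕ}
    (hα : ∀ i < 2 * k + 1, 0 < sin ((i + 1) * α)) :
    (fun θ ↦ ∏ l ∈ Finset.range (k + 1), (cos θ + cos (2 * l * α))) ∈ cosineCone (k + 1) := by
  convert const_mul_mem_cosineCone (c := (2 ^ k)⁻¹) (by positivity)
    (halfAngleProd_mul_cos_mem_cosineCone hα (show 2 * k + 1 + 1 = 2 * (k + 1) by ring)) using 2
    with θ
  have hprod := halfAngleProd_add_two_mul α 1 k θ
  have hone : halfAngleProd α 1 θ = 2 * cos (θ / 2) := by simp [halfAngleProd]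
  have hdouble : 2 * cos (θ / 2) ^ 2 = cos θ + 1 := by rw [cos_sq]; ring_nf
  have hshift (l : ℕ) : 2 * (l + 1 : ℕ) * α = ((1 : ℕ) + 2 * l + 1) * α := by push_cast; ring
  rw [Finset.prod_range_succ', Nat.cast_zero, mul_zero, zero_mul, cos_zero, ← hdouble,
    add_comm (2 * k), hprod, hone, Nat.cast_one, one_mul, eq_inv_mul_iff_mul_eq₀ (by positivity)]
  simp only [hshift, Nat.cast_one]
  ring

end GaussianBinomial

section PolygonNodes

/-- The inner products between distinct vertices of the regular `N`-gon inscribed in the unit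
circle, increasing in `l < N / 2`. -/
noncomputable def polygonNode (N l : ℕ) : ℝ := cos (equiAngle N (N / 2 - l))

variable {A B : ℝ} {N k l m : ℕ} {φ : ℕ → ℝ → ℝ}

theorem polygonNode_eq_neg_cos (hN : N ≠ 0) (hl : l ≤ N / 2) :
    polygonNode N l = -cos ((2 * l + (N % 2 : ℕ)) * (π / N)) := by
  have hdiv : (2 * (N / 2 : ℕ) + (N % 2 : ℕ) : ℝ) = N := by exact_mod_cast Nat.div_add_mod N 2
  rw [polygonNode, equiAngle, ← cos_pi_sub, Nat.cast_sub hl]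
  congr 1
  field_simp
  linear_combination hdiv

theorem polygonNode_lt_one (hl : l < N / 2) : polygonNode N l < 1 := by
  have hN : (0 : ℝ) < N := by exact_mod_cast (by lia : 0 < N)
  have hd : (0 : ℝ) < (N / 2 - l : ℕ) := by exact_mod_cast (by lia : 0 < N / 2 - l)
  have hdN : (2 * (N / 2 - l : ℕ) : ℝ) ≤ N := by exact_mod_cast (by lia : 2 * (N / 2 - l) ≤ N)
  rw [polygonNode, equiAngle, ← cos_zero]
  refine cos_lt_cos_of_nonneg_of_le_pi le_rfl ?_ (by positivity)
  rw [div_le_iff₀ hN, mul_comm π]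
  exact mul_le_mul_of_nonneg_right hdN pi_pos.le

theorem exists_cos_equiAngle_sub_eq_polygonNode {i j : ℕ} (hi : i < N) (hj : j < N) (hij : i ≠ j) :
    ∃ l < N / 2, cos (equiAngle N i - equiAngle N j) = polygonNode N l := by
  wlog hji : j < i generalizing i j
  · obtain ⟨l, hl, h⟩ := this hj hi hij.symm (by lia)
    exact ⟨l, hl, by rw [← h, ← cos_neg, neg_sub]⟩
  have hN : (N : ℝ) ≠ 0 := by exact_mod_cast (by lia : N ≠ 0)
  rcases le_or_gt (i - j) (N / 2) with hd | hd
  · refine ⟨N / 2 - (i - j), by lia, ?_⟩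
    rw [polygonNode, Nat.sub_sub_self hd, equiAngle, equiAngle, equiAngle, Nat.cast_sub hji.le]
    ring_nf
  · refine ⟨N / 2 - (N - (i - j)), by lia, ?_⟩
    rw [polygonNode, Nat.sub_sub_self (by lia), ← cos_two_pi_sub, equiAngle, equiAngle, equiAngle,
      Nat.cast_sub (by lia), Nat.cast_sub hji.le]
    congr 1
    field_simp

theorem exists_eq_of_cos_eq_polygonNode (hN : N ≠ 0) {y : ℝ} (hy : cos y = polygonNode N l) :
    ∃ d : ℤ, y = 2 * d * π / N := by
  obtain ⟨k, hk | hk⟩ := cos_eq_cos_iff.1 hy.symm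
  · refine ⟨k * N + (N / 2 - l : ℕ), ?_⟩
    rw [hk, equiAngle]
    push_cast
    field_simp
  · refine ⟨k * N - (N / 2 - l : ℕ), ?_⟩
    rw [hk, equiAngle]
    push_cast
    field_simp

theorem prod_cos_sub_polygonNode_mem_cosineCone (hk : k ≤ N / 2) :
    (fun θ ↦ ∏ l ∈ Finset.range k, (cos θ - polygonNode N l)) ∈ cosineCone k := by
  obtain _ | k := k
  · simpa using const_mem_cosineCone zero_le_one
  have hN : (0 : ℝ) < N := by exact_mod_cast (by lia : 0 < N)
  have hsin {i : ℕ} (hi : i + 1 < N) : 0 < sin ((i + 1) * (π / N)) := by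
    have hi' : (i + 1 : ℝ) < N := by exact_mod_cast hi
    refine sin_pos_of_pos_of_lt_pi (by positivity) ?_
    rw [mul_div_left_comm]
    exact mul_lt_of_lt_one_right pi_pos ((div_lt_one hN).2 hi')
  have hnode : (fun θ ↦ ∏ l ∈ Finset.range (k + 1), (cos θ - polygonNode N l)) = fun θ ↦
      ∏ l ∈ Finset.range (k + 1), (cos θ + cos ((2 * l + (N % 2 : ℕ)) * (π / N))) := by
    refine funext fun θ ↦ Finset.prod_congr rfl fun l hl ↦ ?_
    rw [polygonNode_eq_neg_cos (by lia) (by grind), sub_neg_eq_add]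
  rw [hnode]
  rcases Nat.mod_two_eq_zero_or_one N with hpar | hpar
  · simp only [hpar, Nat.cast_zero, add_zero]
    exact prod_cos_add_cos_even_mem_cosineCone fun i hi ↦ hsin (by lia)
  · simp only [hpar, Nat.cast_one]
    exact prod_cos_add_cos_odd_mem_cosineCone fun i hi ↦ hsin (by lia)

theorem hermiteInterpolant_cos_sub_mem_cosineCone (hm : m ≠ 0) (hmN : m ≤ N / 2)
    (h : MonotoneTower A B (2 * m) φ) (hnode : ∀ l < m, polygonNode N l ∈ Icc A B) :
    (fun θ ↦ hermiteInterpolant (polygonNode N) m φ (cos θ) - φ 0 (polygonNode N 0)) ∈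
      cosineCone (2 * m - 1) := by
  obtain ⟨n, hn⟩ : ∃ n, 2 * m = n + 1 := ⟨2 * m - 1, by lia⟩
  have hexpand : (fun θ ↦ hermiteInterpolant (polygonNode N) m φ (cos θ) - φ 0 (polygonNode N 0)) =
      ∑ l ∈ Finset.range n, fun θ ↦
        dividedDiff (fun i ↦ polygonNode N (i / 2)) φ (l + 1) 0 (polygonNode N ((l + 1) / 2)) *
          ∏ i ∈ Finset.range (l + 1), (cos θ - polygonNode N (i / 2)) := by
    ext θ
    simp only [hermiteInterpolant, hn, Finset.sum_range_succ', Finset.sum_apply, dividedDiff,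
      Finset.range_zero, Finset.prod_empty, mul_one, Nat.zero_div, add_sub_cancel_right]
  rw [hexpand]
  refine sum_mem fun l hl ↦ const_mul_mem_cosineCone ?_ ?_
  · exact dividedDiff_nonneg (h.of_le (by grind)) (fun i hi ↦ hnode _ (by grind))
      (hnode _ (by grind))
  · simp only [fun θ ↦ prod_range_div_two (fun i ↦ cos θ - polygonNode N i)]
    exact cosineCone_mono (by grind) (mul_mem_cosineCone
      (prod_cos_sub_polygonNode_mem_cosineCone (k := (l + 1 + 1) / 2) (by grind))
      (prod_cos_sub_polygonNode_mem_cosineCone (k := (l + 1) / 2) (by grind)))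

end PolygonNodes

section CosEnergy

/-- The energy of `N` points of the unit circle, given by their angles, for a pair potential `g`
that is a function of the inner product. -/
noncomputable def cosEnergy {N : ℕ} (g : ℝ → ℝ) (x : Fin N → ℝ) : ℝ :=
  ∑ p ∈ Finset.univ.offDiag, g (cos (x p.1 - x p.2))

variable {B c : ℝ} {N n : ℕ} {P g H : ℝ → ℝ} {φ : ℕ → ℝ → ℝ} {x : Fin N → ℝ}

theorem sum_offDiag_equiAngle_le (hP : P ∈ cosineCone n) (hn : n < N)
    (x : Fin N → ℝ) :
    ∑ p ∈ (Finset.univ : Finset (Fin N)).offDiag, P (equiAngle N p.1 - equiAngle N p.2) ≤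
      ∑ p ∈ Finset.univ.offDiag, P (x p.1 - x p.2) := by
  have hdiag (z : Fin N → ℝ) : ∑ i, ∑ j, P (z i - z j) =
      N * P 0 + ∑ p ∈ Finset.univ.offDiag, P (z p.1 - z p.2) := by
    rw [← Finset.sum_product', ← Finset.diag_union_offDiag,
      Finset.sum_union (Finset.disjoint_diag_offDiag _), Finset.sum_diag]
    simp
  have hle := sum_equiAngle_le_of_mem_cosineCone hP hn x
  rw [hdiag fun i ↦ equiAngle N i, hdiag x] at hle
  exact le_of_add_le_add_left hle

theorem cosEnergy_equiAngle_le_of_mem_cosineCone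
    (hH : (fun θ ↦ H (cos θ) - c) ∈ cosineCone n) (hn : n < N) (x : Fin N → ℝ) :
    cosEnergy H (fun i : Fin N ↦ equiAngle N i) ≤ cosEnergy H x := by
  have hle := sum_offDiag_equiAngle_le hH hn x
  rwa [Finset.sum_sub_distrib, Finset.sum_sub_distrib, sub_le_sub_iff_right] at hle

theorem cosEnergy_equiAngle_congr (hnode : ∀ l < N / 2, H (polygonNode N l) = g (polygonNode N l)) :
    cosEnergy H (fun i : Fin N ↦ equiAngle N i) = cosEnergy g (fun i : Fin N ↦ equiAngle N i) := by
  refine Finset.sum_congr rfl fun p hp ↦ ?_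
  obtain ⟨l, hl, hcos⟩ := exists_cos_equiAngle_sub_eq_polygonNode p.1.2 p.2.2
    (Fin.val_ne_of_ne (Finset.mem_offDiag.1 hp).2.2)
  rw [hcos, hnode l hl]

theorem cosEnergy_mono (hle : ∀ i j, i ≠ j → H (cos (x i - x j)) ≤ g (cos (x i - x j))) :
    cosEnergy H x ≤ cosEnergy g x :=
  Finset.sum_le_sum fun p hp ↦ hle p.1 p.2 (Finset.mem_offDiag.1 hp).2.2

theorem cosEnergy_equiAngle_le_of_minorant (hH : (fun θ ↦ H (cos θ) - c) ∈ cosineCone n)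
    (hn : n < N) (hnode : ∀ l < N / 2, H (polygonNode N l) = g (polygonNode N l))
    (hle : ∀ i j, i ≠ j → H (cos (x i - x j)) ≤ g (cos (x i - x j))) :
    cosEnergy g (fun i : Fin N ↦ equiAngle N i) ≤ cosEnergy g x :=
  calc cosEnergy g (fun i : Fin N ↦ equiAngle N i)
      = cosEnergy H (fun i : Fin N ↦ equiAngle N i) := (cosEnergy_equiAngle_congr hnode).symm
    _ ≤ cosEnergy H x := cosEnergy_equiAngle_le_of_mem_cosineCone hH hn x
    _ ≤ cosEnergy g x := cosEnergy_mono hle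

theorem minorant_eq_of_cosEnergy_eq (hH : (fun θ ↦ H (cos θ) - c) ∈ cosineCone n)
    (hn : n < N) (hnode : ∀ l < N / 2, H (polygonNode N l) = g (polygonNode N l))
    (hle : ∀ i j, i ≠ j → H (cos (x i - x j)) ≤ g (cos (x i - x j)))
    (heq : cosEnergy g x = cosEnergy g (fun i : Fin N ↦ equiAngle N i)) {i j : Fin N}
    (hij : i ≠ j) : H (cos (x i - x j)) = g (cos (x i - x j)) := by
  have htight : cosEnergy H x = cosEnergy g x := by
    refine (cosEnergy_mono hle).antisymm ?_
    rw [heq, ← cosEnergy_equiAngle_congr hnode]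
    exact cosEnergy_equiAngle_le_of_mem_cosineCone hH hn x
  exact (Finset.sum_eq_sum_iff_of_le fun p hp ↦ hle p.1 p.2 (Finset.mem_offDiag.1 hp).2.2).1
    htight (i, j) (Finset.mem_offDiag.2 ⟨Finset.mem_univ i, Finset.mem_univ j, hij⟩)

theorem cosEnergy_equiAngle_le (hN : 2 ≤ N) (h : MonotoneTower (-1) B (2 * (N / 2)) φ)
    (hnode : ∀ l < N / 2, polygonNode N l ∈ Icc (-1) B)
    (hx : ∀ i j, i ≠ j → cos (x i - x j) ∈ Icc (-1) B) :
    cosEnergy (φ 0) (fun i : Fin N ↦ equiAngle N i) ≤ cosEnergy (φ 0) x :=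
  cosEnergy_equiAngle_le_of_minorant
    (hermiteInterpolant_cos_sub_mem_cosineCone (by lia) le_rfl h hnode) (by lia)
    (fun _ hl ↦ hermiteInterpolant_node h hnode hl)
    fun i j hij ↦ hermiteInterpolant_le (by lia) h hnode (hx i j hij)

theorem exists_polygonNode_of_cosEnergy_eq (hN : 2 ≤ N)
    (h : MonotoneTower (-1) B (2 * (N / 2)) φ)
    (hpos : ∀ t ∈ Ioo (-1) B, 0 < φ (2 * (N / 2)) t)
    (hnode : ∀ l < N / 2, polygonNode N l ∈ Icc (-1) B)
    (hx : ∀ i j, i ≠ j → cos (x i - x j) ∈ Icc (-1) B)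
    (heq : cosEnergy (φ 0) x = cosEnergy (φ 0) (fun i : Fin N ↦ equiAngle N i))
    {i j : Fin N} (hij : i ≠ j) : ∃ l < N / 2, cos (x i - x j) = polygonNode N l :=
  exists_eq_node_of_hermiteInterpolant_eq (by lia) h hnode hpos (hx i j hij)
    (minorant_eq_of_cosEnergy_eq
      (hermiteInterpolant_cos_sub_mem_cosineCone (by lia) le_rfl h hnode) (by lia)
      (fun _ hl ↦ hermiteInterpolant_node h hnode hl)
      (fun i j hij ↦ hermiteInterpolant_le (by lia) h hnode (hx i j hij)) heq hij)

end CosEnergy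

section Circle

variable {N : ℕ} {r : ℝ} {f : ℝ → ℝ}

theorem norm_circlePt_sub_sq (r a b : ℝ) :
    ‖circlePt r a - circlePt r b‖ ^ 2 = 2 * r ^ 2 * (1 - cos (a - b)) := by
  rw [EuclideanSpace.norm_sq_eq, cos_sub]
  simp only [circlePt, WithLp.equiv_symm_apply, PiLp.sub_apply, Fin.sum_univ_two,
    Matrix.cons_val_zero, Matrix.cons_val_one, norm_eq_abs, sq_abs]
  linear_combination r ^ 2 * sin_sq_add_cos_sq a + r ^ 2 * sin_sq_add_cos_sq b

theorem exists_eq_circlePt {p : EuclideanSpace ℝ (Fin 2)} (hp : ‖p‖ = r) :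
    ∃ θ, p = circlePt r θ := by
  have hnorm : ‖(⟨p 0, p 1⟩ : ℂ)‖ = r := by
    rw [← hp, EuclideanSpace.norm_eq, Complex.norm_eq_sqrt_sq_add_sq, Fin.sum_univ_two,
      norm_eq_abs, norm_eq_abs, sq_abs, sq_abs]
  have hcos := Complex.norm_mul_cos_arg ⟨p 0, p 1⟩
  have hsin := Complex.norm_mul_sin_arg ⟨p 0, p 1⟩
  rw [hnorm] at hcos hsin
  refine ⟨Complex.arg ⟨p 0, p 1⟩, ?_⟩
  ext i
  fin_cases i
  · exact hcos.symm
  · exact hsin.symm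

theorem exists_eq_circlePt_comp {ι : Type*} {X : ι → EuclideanSpace ℝ (Fin 2)}
    (hX : ∀ i, ‖X i‖ = r) : ∃ x : ι → ℝ, X = fun i ↦ circlePt r (x i) := by
  choose x hx using fun i ↦ exists_eq_circlePt (hX i)
  exact ⟨x, funext hx⟩

theorem cos_sub_lt_one_of_circlePt_ne {a b : ℝ} (h : circlePt r a ≠ circlePt r b) :
    cos (a - b) < 1 := by
  refine (cos_le_one _).lt_of_ne fun hcos ↦ h ?_
  have hnorm := norm_circlePt_sub_sq r a b
  rwa [hcos, sub_self, mul_zero, sq_eq_zero_iff, norm_sub_eq_zero_iff] at hnorm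

theorem exists_fin_circlePt_eq (hN : N ≠ 0) (r θ : ℝ) (d : ℤ) :
    ∃ s : Fin N, circlePt r (θ + 2 * d * π / N) = circlePt r (θ + 2 * (s : ℕ) * π / N) := by
  have hN' : (0 : ℤ) < N := by lia
  have hlt := Int.emod_lt_of_pos d hN'
  lift d % N to ℕ using Int.emod_nonneg d hN'.ne' with s hs
  refine ⟨⟨s, by exact_mod_cast hlt⟩, ?_⟩
  have hd : (d : ℝ) = N * (d / N : ℤ) + s := by
    exact_mod_cast (hs ▸ (Int.mul_ediv_add_emod d N).symm : d = N * (d / N) + s)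
  have hangle : θ + 2 * d * π / N = θ + 2 * s * π / N + (d / N : ℤ) * (2 * π) := by
    rw [hd]
    field_simp
    ring
  rw [circlePt, hangle, cos_add_int_mul_two_pi, sin_add_int_mul_two_pi, circlePt]

theorem exists_perm_circlePt_eq (hN : N ≠ 0) {x : Fin N → ℝ}
    (hinj : Function.Injective fun k ↦ circlePt r (x k))
    (hx : ∀ i j, i ≠ j → ∃ d : ℤ, x i - x j = 2 * d * π / N) :
    ∃ (θ : ℝ) (σ : Equiv.Perm (Fin N)),
      ∀ k, circlePt r (x k) = circlePt r (θ + 2 * (σ k : ℕ) * π / N) := by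
  have : NeZero N := ⟨hN⟩
  have hslot (k : Fin N) : ∃ s : Fin N,
      circlePt r (x k) = circlePt r (x 0 + 2 * (s : ℕ) * π / N) := by
    obtain ⟨d, hd⟩ : ∃ d : ℤ, x k - x 0 = 2 * d * π / N := by
      rcases eq_or_ne k 0 with rfl | hk
      · exact ⟨0, by simp⟩
      · exact hx k 0 hk
    rw [eq_add_of_sub_eq' hd]
    exact exists_fin_circlePt_eq hN r (x 0) d
  choose σ hσ using hslot
  have hσinj : Function.Injective σ := fun i j hij ↦ hinj (by
    simp only [hσ i, hσ j, hij])
  exact ⟨x 0, Equiv.ofBijective σ (Finite.injective_iff_bijective.1 hσinj), hσ⟩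

theorem exists_lt_one_forall_mem_Icc {x : Fin N → ℝ}
    (hinj : Function.Injective fun k ↦ circlePt r (x k)) :
    ∃ B < (1 : ℝ), (∀ l < N / 2, polygonNode N l ∈ Icc (-1) B) ∧
      ∀ i j, i ≠ j → cos (x i - x j) ∈ Icc (-1) B := by
  have hlt {c : ℝ} (hc : c < 1) : ∀ᶠ B in 𝓝[<] 1, c ≤ B :=
    nhdsWithin_le_nhds ((eventually_gt_nhds hc).mono fun _ ↦ le_of_lt)
  have hnode : ∀ᶠ B in 𝓝[<] (1 : ℝ), ∀ l ∈ Finset.range (N / 2), polygonNode N l ≤ B :=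
    (eventually_all_finset _).2 fun l hl ↦ hlt (polygonNode_lt_one (Finset.mem_range.1 hl))
  have hcos : ∀ᶠ B in 𝓝[<] (1 : ℝ), ∀ i j, i ≠ j → cos (x i - x j) ≤ B := by
    simp only [eventually_all]
    exact fun i j hij ↦ hlt (cos_sub_lt_one_of_circlePt_ne (hinj.ne hij))
  obtain ⟨B, ⟨hBnode, hBcos⟩, hB⟩ := ((hnode.and hcos).and self_mem_nhdsWithin).exists
  exact ⟨B, hB, fun l hl ↦ ⟨neg_one_le_cos _, hBnode l (Finset.mem_range.2 hl)⟩,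
    fun i j hij ↦ ⟨neg_one_le_cos _, hBcos i j hij⟩⟩

/-- The derivatives of the potential `t ↦ f (2r²(1 - t))`, that is of `f` as a function of the
cosine `t` of the angle between two points of the circle of radius `r`. -/
noncomputable def circlePotential (r : ℝ) (f : ℝ → ℝ) (j : ℕ) (t : ℝ) : ℝ :=
  (2 * r ^ 2) ^ j * ((-1) ^ j *
    iteratedDerivWithin j f (Ioc 0 (4 * r ^ 2)) (2 * r ^ 2 * (1 - t)))

theorem pairEnergy_circlePt (N : ℕ) (r : ℝ) (f : ℝ → ℝ) (x : Fin N → ℝ) :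
    pairEnergy N f (fun k ↦ circlePt r (x k)) = cosEnergy (circlePotential r f 0) x := by
  have hoffDiag : (Finset.univ : Finset (Fin N × Fin N)).filter (fun p ↦ p.1 ≠ p.2) =
      Finset.univ.offDiag := by
    ext p
    simp
  rw [pairEnergy, cosEnergy, ← hoffDiag, Finset.sum_filter, Fintype.sum_prod_type]
  simp only [norm_circlePt_sub_sq, circlePotential, pow_zero, one_mul, iteratedDerivWithin_zero]

theorem pairEnergy_equallySpaced (N : ℕ) (r θ : ℝ) (f : ℝ → ℝ) :
    pairEnergy N f (fun k ↦ circlePt r (θ + 2 * (k : ℕ) * π / N)) =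
      cosEnergy (circlePotential r f 0) (fun k : Fin N ↦ equiAngle N k) := by
  rw [pairEnergy_circlePt]
  simp only [cosEnergy, add_sub_add_left_eq_sub, equiAngle]

theorem sq_mul_one_sub_mem_Ioc (hr : r ≠ 0) {B t : ℝ} (hB : B < 1) (ht : t ∈ Icc (-1) B) :
    2 * r ^ 2 * (1 - t) ∈ Ioc 0 (4 * r ^ 2) :=
  ⟨mul_pos (by positivity) (sub_pos.2 (ht.2.trans_lt hB)),
    (mul_le_mul_of_nonneg_left (by linarith [ht.1] : 1 - t ≤ 2) (by positivity)).trans_eq (by ring)⟩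

theorem sq_mul_one_sub_mem_Ioo (hr : r ≠ 0) {B t : ℝ} (hB : B < 1) (ht : t ∈ Ioo (-1) B) :
    2 * r ^ 2 * (1 - t) ∈ Ioo 0 (4 * r ^ 2) :=
  ⟨mul_pos (by positivity) (sub_pos.2 (ht.2.trans hB)),
    (mul_lt_mul_of_pos_left (by linarith [ht.1] : 1 - t < 2) (by positivity)).trans_eq (by ring)⟩

theorem hasDerivAt_circlePotential (hr : r ≠ 0) {B t : ℝ} (hB : B < 1) {n j : ℕ}
    (hf : ContDiffOn ℝ n f (Ioc 0 (4 * r ^ 2))) (hj : j < n) (ht : t ∈ Ioo (-1) B) :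
    HasDerivAt (circlePotential r f j) (circlePotential r f (j + 1) t) t := by
  have hmem := sq_mul_one_sub_mem_Ioo hr hB ht
  have hnhds : Ioc 0 (4 * r ^ 2) ∈ 𝓝 (2 * r ^ 2 * (1 - t)) := Ioc_mem_nhds hmem.1 hmem.2
  have houter := ((hf.differentiableOn_iteratedDerivWithin (m := j) (by exact_mod_cast hj)
    (uniqueDiffOn_Ioc _ _)) _ (Ioo_subset_Ioc_self hmem)).hasDerivWithinAt.hasDerivAt hnhds
  rw [← iteratedDerivWithin_succ] at houter
  have hinner : HasDerivAt (fun t ↦ 2 * r ^ 2 * (1 - t)) (2 * r ^ 2 * (-1)) t :=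
    ((hasDerivAt_id t).const_sub 1).const_mul _
  refine (((houter.comp t hinner).const_mul ((-1) ^ j)).const_mul ((2 * r ^ 2) ^ j)).congr_deriv ?_
  rw [circlePotential]
  ring

theorem monotoneTower_circlePotential (hr : r ≠ 0) {B : ℝ} (hB : B < 1) {n : ℕ}
    (hf : ContDiffOn ℝ n f (Ioc 0 (4 * r ^ 2)))
    (hsign : ∀ k, 1 ≤ k → k ≤ n → ∀ t ∈ Ioc 0 (4 * r ^ 2),
      0 ≤ (-1) ^ k * iteratedDerivWithin k f (Ioc 0 (4 * r ^ 2)) t) :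
    MonotoneTower (-1) B n (circlePotential r f) where
  continuousOn j hj :=
    continuousOn_const.mul (continuousOn_const.mul
      ((hf.continuousOn_iteratedDerivWithin (by exact_mod_cast hj) (uniqueDiffOn_Ioc _ _)).comp
        (by fun_prop) fun _ ht ↦ sq_mul_one_sub_mem_Ioc hr hB ht))
  nonneg j hj hjn _ ht := mul_nonneg (by positivity)
    (hsign j hj hjn _ (sq_mul_one_sub_mem_Ioc hr hB ht))
  hasDerivAt _ hj _ ht := hasDerivAt_circlePotential hr hB hf hj ht

theorem pairEnergy_equallySpaced_le (hN : 2 ≤ N) (hr : r ≠ 0)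
    (hf : ContDiffOn ℝ ((2 * (N / 2) : ℕ)) f (Ioc 0 (4 * r ^ 2)))
    (hsign : ∀ k, 1 ≤ k → k ≤ 2 * (N / 2) → ∀ t ∈ Ioc 0 (4 * r ^ 2),
      0 ≤ (-1) ^ k * iteratedDerivWithin k f (Ioc 0 (4 * r ^ 2)) t)
    {x : Fin N → ℝ} (hinj : Function.Injective fun k ↦ circlePt r (x k)) (θ : ℝ) :
    pairEnergy N f (fun k ↦ circlePt r (θ + 2 * (k : ℕ) * π / N)) ≤
      pairEnergy N f (fun k ↦ circlePt r (x k)) := by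
  obtain ⟨B, hB, hnode, hcos⟩ := exists_lt_one_forall_mem_Icc hinj
  rw [pairEnergy_equallySpaced, pairEnergy_circlePt]
  exact cosEnergy_equiAngle_le hN (monotoneTower_circlePotential hr hB hf hsign) hnode hcos

theorem exists_perm_of_pairEnergy_eq (hN : 2 ≤ N) (hr : r ≠ 0)
    (hf : ContDiffOn ℝ ((2 * (N / 2) : ℕ)) f (Ioc 0 (4 * r ^ 2)))
    (hsign : ∀ k, 1 ≤ k → k ≤ 2 * (N / 2) → ∀ t ∈ Ioc 0 (4 * r ^ 2),
      0 ≤ (-1) ^ k * iteratedDerivWithin k f (Ioc 0 (4 * r ^ 2)) t)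
    (hpos : ∀ t ∈ Ioo 0 (4 * r ^ 2),
      0 < iteratedDerivWithin (2 * (N / 2)) f (Ioc 0 (4 * r ^ 2)) t)
    {x : Fin N → ℝ} (hinj : Function.Injective fun k ↦ circlePt r (x k))
    (heq : pairEnergy N f (fun k ↦ circlePt r (x k)) =
      pairEnergy N f (fun k ↦ circlePt r (2 * (k : ℕ) * π / N))) :
    ∃ (θ : ℝ) (σ : Equiv.Perm (Fin N)),
      ∀ k, circlePt r (x k) = circlePt r (θ + 2 * (σ k : ℕ) * π / N) := by
  obtain ⟨B, hB, hnode, hcos⟩ := exists_lt_one_forall_mem_Icc hinj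
  rw [pairEnergy_circlePt, pairEnergy_circlePt] at heq
  have hpos' : ∀ t ∈ Ioo (-1) B, 0 < circlePotential r f (2 * (N / 2)) t := fun t ht ↦ by
    rw [circlePotential, (even_two_mul _).neg_one_pow, one_mul]
    exact mul_pos (by positivity) (hpos _ (sq_mul_one_sub_mem_Ioo hr hB ht))
  refine exists_perm_circlePt_eq (by lia) hinj fun i j hij ↦ ?_
  obtain ⟨l, -, hl⟩ := exists_polygonNode_of_cosEnergy_eq hN
    (monotoneTower_circlePotential hr hB hf hsign) hpos' hnode hcos heq hij
  exact exists_eq_of_cos_eq_polygonNode (by lia) hl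

end Circle

theorem equally_spaced_minimize_energy_on_circle_general
    (N : ℕ) (hN : 2 ≤ N) (r : ℝ) (hr : 0 < r) (f : ℝ → ℝ)
    (hf : ContDiffOn ℝ ((2 * (N / 2) : ℕ)) f (Set.Ioc 0 (4 * r ^ 2)))
    (hsign : ∀ k, 1 ≤ k → k ≤ 2 * (N / 2) → ∀ t ∈ Set.Ioc (0 : ℝ) (4 * r ^ 2),
      0 ≤ (-1 : ℝ) ^ k * iteratedDerivWithin k f (Set.Ioc 0 (4 * r ^ 2)) t) :
    (∀ θ : ℝ, ∀ X : Fin N → EuclideanSpace ℝ (Fin 2),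
      (∀ i, ‖X i‖ = r) → Function.Injective X →
      pairEnergy N f (fun k : Fin N => circlePt r (θ + 2 * (k : ℕ) * π / N)) ≤
        pairEnergy N f X) ∧
    ((∀ t ∈ Set.Ioo (0 : ℝ) (4 * r ^ 2),
        0 < iteratedDerivWithin (2 * (N / 2)) f (Set.Ioc 0 (4 * r ^ 2)) t) →
      ∀ X : Fin N → EuclideanSpace ℝ (Fin 2),
        (∀ i, ‖X i‖ = r) → Function.Injective X →
        pairEnergy N f X =
          pairEnergy N f (fun k : Fin N => circlePt r (2 * (k : ℕ) * π / N)) →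
        ∃ (θ : ℝ) (σ : Equiv.Perm (Fin N)),
          ∀ k : Fin N, X k = circlePt r (θ + 2 * ((σ k : ℕ) : ℝ) * π / N)) := by
  refine ⟨fun θ X hX hinj ↦ ?_, fun hpos X hX hinj heq ↦ ?_⟩
  · obtain ⟨x, rfl⟩ := exists_eq_circlePt_comp hX
    exact pairEnergy_equallySpaced_le hN hr.ne' hf hsign hinj θ
  · obtain ⟨x, rfl⟩ := exists_eq_circlePt_comp hX
    exact exists_perm_of_pairEnergy_eq hN hr.ne' hf hsign hpos hinj heq

/-- For `N ≥ 4`, `m = ⌊N/2⌋` and `f` completely monotonic up to order `2m` on `(0,4r²]`,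
`N` equally spaced points on the circle `C_r` minimize the energy `Σ_{i≠j} f(‖x_i−x_j‖²)`
among `N`-tuples of pairwise distinct points of `C_r`; for strictly completely monotonic
`f` they are the only minimizers. -/
theorem equally_spaced_minimize_energy_on_circle
    (N : ℕ) (hN : 4 ≤ N) (r : ℝ) (hr : 0 < r) (f : ℝ → ℝ)
    (hf : ContDiffOn ℝ ((2 * (N / 2) : ℕ)) f (Set.Ioc 0 (4 * r ^ 2)))
    (hsign : ∀ k ≤ 2 * (N / 2), ∀ t ∈ Set.Ioc (0 : ℝ) (4 * r ^ 2),
      0 ≤ (-1 : ℝ) ^ k * iteratedDerivWithin k f (Set.Ioc 0 (4 * r ^ 2)) t) :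
    (∀ θ : ℝ, ∀ X : Fin N → EuclideanSpace ℝ (Fin 2),
      (∀ i, ‖X i‖ = r) → Function.Injective X →
      pairEnergy N f (fun k : Fin N => circlePt r (θ + 2 * (k : ℕ) * π / N)) ≤
        pairEnergy N f X) ∧
    ((∀ k ≤ 2 * (N / 2), ∀ t ∈ Set.Ioo (0 : ℝ) (4 * r ^ 2),
        0 < (-1 : ℝ) ^ k * iteratedDerivWithin k f (Set.Ioc 0 (4 * r ^ 2)) t) →
      ∀ X : Fin N → EuclideanSpace ℝ (Fin 2),
        (∀ i, ‖X i‖ = r) → Function.Injective X →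
        pairEnergy N f X =
          pairEnergy N f (fun k : Fin N => circlePt r (2 * (k : ℕ) * π / N)) →
        ∃ (θ : ℝ) (σ : Equiv.Perm (Fin N)),
          ∀ k : Fin N, X k = circlePt r (θ + 2 * ((σ k : ℕ) : ℝ) * π / N)) :=
  (equally_spaced_minimize_energy_on_circle_general N (by lia) r hr f hf
    fun k _ ↦ hsign k).imp_right fun hunique hpos ↦ hunique fun t ht ↦ by
      simpa only [(even_two_mul _).neg_one_pow, one_mul] using hpos _ le_rfl t ht
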